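/- Fix real α, β > −1, j ∈ ℕ with j ≥ 1, M > 0, and a sequence M_n ≥ 0 with lim_{n→∞} M_n n^γ = M, where γ = 2(α+2j+1). If M > 2^{α+β+2j+1}·(α+j+1)·(α+2j+1)·Γ²(α+j+1)/j, then the largest real zero y_{n,1} of Q_n satisfies lim_{n→∞} y_{n,1} = 1. -/

import Mathlib

open Polynomial Filter

/-- The Jacobi polynomial `P_n^{(α,β)}` as a real polynomial. -/
noncomputable def jacobiP (α β : ℝ) (n : ℕ) : Polynomial ℝ :=
  ∑ k ∈ Finset.range (n + 1),
    Polynomial.C (Real.Gamma (n + α + 1) / (Real.Gamma ((n : ℝ) - k + 1) * Real.Gamma (α + k + 1)) *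
        (Real.Gamma (n + β + 1) / (Real.Gamma ((k : ℝ) + 1) * Real.Gamma ((n : ℝ) - k + β + 1)))) *
      (Polynomial.C (2⁻¹ : ℝ) * (Polynomial.X - 1)) ^ k *
      (Polynomial.C (2⁻¹ : ℝ) * (Polynomial.X + 1)) ^ (n - k)

/-- The squared Jacobi norm `‖P_n^{(α,β)}‖²`. -/
noncomputable def jacobiNormSq (α β : ℝ) (n : ℕ) : ℝ :=
  ∫ x in (-1 : ℝ)..1, (jacobiP α β n).eval x ^ 2 * (1 - x) ^ α * (1 + x) ^ β

/-- The kernel `K_n^{(j,k)}(x,y)`. -/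
noncomputable def kernK (α β : ℝ) (j k n : ℕ) (x y : ℝ) : ℝ :=
  ∑ i ∈ Finset.range (n + 1),
    (Polynomial.derivative^[j] (jacobiP α β i)).eval x *
      (Polynomial.derivative^[k] (jacobiP α β i)).eval y / jacobiNormSq α β i

/-- The kernel `K_n^{(j,0)}(1,·)` as a polynomial. -/
noncomputable def kernKPoly (α β : ℝ) (j n : ℕ) : Polynomial ℝ :=
  ∑ i ∈ Finset.range (n + 1),
    Polynomial.C ((Polynomial.derivative^[j] (jacobiP α β i)).eval 1 / jacobiNormSq α β i) *
      jacobiP α β i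

/-- The varying Sobolev inner product `(f,g)_{S,n}` with mass `m`. -/
noncomputable def sobInner (α β : ℝ) (j : ℕ) (m : ℝ) (f g : Polynomial ℝ) : ℝ :=
  (∫ x in (-1 : ℝ)..1, f.eval x * g.eval x * (1 - x) ^ α * (1 + x) ^ β) +
    m * (Polynomial.derivative^[j] f).eval 1 * (Polynomial.derivative^[j] g).eval 1

/-- The Jacobi–Sobolev orthogonal polynomial `Q_n`. -/
noncomputable def sobQ (α β : ℝ) (j : ℕ) (Ms : ℕ → ℝ) (n : ℕ) : Polynomial ℝ :=
  jacobiP α β n -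
    Polynomial.C (Ms n * (Polynomial.derivative^[j] (jacobiP α β n)).eval 1 /
        (1 + Ms n * kernK α β j j (n - 1) 1 1)) *
      kernKPoly α β j (n - 1)

/-!
Each ratio `Q_n^{(k)}(1) / P_n^{(k)}(1)` has an explicit limit as `n → ∞`: the values
`P_n^{(k)}(1)`, the norms and hence the kernels `K_{n-1}^{(j,k)}(1,1)` are all equivalent to
constants times powers of `n`, and `γ` is the exponent that balances `M_n` against
`K_{n-1}^{(j,j)}(1,1)`. Above the critical mass the limit for `k = 0` is negative, so `Q_n(1) < 0`
and `Q_n` has a zero beyond `1`. On the other hand the limit for `k = j` is positive, the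
derivatives at `1` of order below `j` are negligible against the `j`-th, and those of order above
`j` are nonnegative; by Taylor expansion at `1`, `Q_n` is eventually positive on `[1 + δ, ∞)` for
every `δ > 0`. This confines the largest zero to `[1, 1 + δ)`.
-/

section Binomials

lemma ringChoose_succ (x : ℝ) (k : ℕ) :
    Ring.choose x (k + 1) = Ring.choose x k * (x - k) / (k + 1) := by
  have h := Ring.choose_smul_choose x (Nat.le_succ k)
  rw [Nat.succ_eq_add_one, Nat.choose_succ_self_right, Nat.add_sub_cancel_left,
    Ring.choose_one_right, nsmul_eq_mul] at h
  rw [← h, Nat.cast_add_one, mul_div_cancel_left₀ _ k.cast_add_one_ne_zero]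

lemma ringChoose_add_one_succ (x : ℝ) (k : ℕ) :
    Ring.choose (x + 1) (k + 1) = Ring.choose x k * (x + 1) / (k + 1) := by
  have h := Ring.choose_smul_choose (x + 1) (show 1 ≤ k + 1 by lia)
  rw [Nat.choose_one_right, Nat.add_sub_cancel, Ring.choose_one_right, Nat.cast_one,
    add_sub_cancel_right, nsmul_eq_mul, mul_comm (x + 1)] at h
  rw [← h, Nat.cast_add_one, mul_div_cancel_left₀ _ k.cast_add_one_ne_zero]

lemma ringChoose_eq_Gamma_div {x : ℝ} {k : ℕ} (hk : k < x + 1) :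
    Ring.choose x k = Real.Gamma (x + 1) / (k.factorial * Real.Gamma (x - k + 1)) := by
  induction k with
  | zero =>
    have hx : Real.Gamma (x + 1) ≠ 0 := (Real.Gamma_pos_of_pos (by simpa using hk)).ne'
    simp [hx]
  | succ k ih =>
    push_cast at hk ⊢
    have hxk : 0 < x - k := by linarith
    have hΓ : Real.Gamma (x - k) ≠ 0 := (Real.Gamma_pos_of_pos hxk).ne'
    rw [ringChoose_succ, ih (by linarith), Real.Gamma_add_one hxk.ne',
      show x - (k + 1) + 1 = x - k by ring, Nat.factorial_succ]
    push_cast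
    field_simp

lemma ringChoose_pos {x : ℝ} {k : ℕ} (hk : k < x + 1) : 0 < Ring.choose x k := by
  have hx : 0 < x + 1 := k.cast_nonneg.trans_lt hk
  rw [ringChoose_eq_Gamma_div hk]
  exact div_pos (Real.Gamma_pos_of_pos hx)
    (mul_pos (mod_cast k.factorial_pos) (Real.Gamma_pos_of_pos (by linarith)))

/-- Chu–Vandermonde combined with the trinomial revision
`C(x,n-k) C(n-k,m-k) = C(x,n-m) C(x-n+m,m-k)`. -/
lemma sum_ringChoose_mul_ringChoose_mul_choose (x y : ℝ) {m n : ℕ} (hmn : m ≤ n) :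
    ∑ k ∈ Finset.range (m + 1),
        Ring.choose x (n - k) * Ring.choose y k * ((n - k).choose (m - k) : ℝ) =
      Ring.choose x (n - m) * Ring.choose (x + y + m - n) m := by
  have hxy : x + y + m - n = y + (x - (n - m : ℕ)) := by
    rw [Nat.cast_sub hmn]
    ring
  rw [hxy, Ring.add_choose_eq m (Commute.all _ _),
    Finset.Nat.sum_antidiagonal_eq_sum_range_succ
      (fun i l => Ring.choose y i * Ring.choose (x - (n - m : ℕ)) l) m, Finset.mul_sum]
  refine Finset.sum_congr rfl fun k hk => ?_
  have hkm : k ≤ m := Finset.mem_range_succ_iff.1 hk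
  have revision := Ring.choose_smul_choose x (show n - m ≤ n - k by lia)
  rw [show n - k - (n - m) = m - k by lia, nsmul_eq_mul,
    show (n - k).choose (n - m) = (n - k).choose (m - k) from
      Nat.choose_symm_of_eq_add (by lia)] at revision
  linear_combination Ring.choose y k * revision

end Binomials

section Taylor

variable {R : Type*} [CommRing R]

lemma iterate_derivative_eval_eq_factorial_mul_coeff_taylor (p : R[X]) (r : R) (k : ℕ) :
    (derivative^[k] p).eval r = k.factorial * (taylor r p).coeff k := by
  rw [taylor_coeff, ← factorial_smul_hasseDeriv, LinearMap.smul_apply, eval_smul, nsmul_eq_mul]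

lemma coeff_C_mul_X_pow_mul_add_one_pow (r : R) (k l m : ℕ) :
    ((C r * X) ^ k * (C r * X + 1) ^ l).coeff m =
      if k ≤ m then (l.choose (m - k) : R) * r ^ m else 0 := by
  have hcomp : (C r * X) ^ k * (C r * X + 1) ^ l = (X ^ k * (X + 1) ^ l).comp (C r * X) := by simp
  rw [hcomp, comp_C_mul_X_coeff, coeff_X_pow_mul', coeff_X_add_one_pow]
  split_ifs <;> simp

lemma eval_eq_sum_coeff_taylor_mul_pow (p : R[X]) (r x : R) {N : ℕ} (hN : p.natDegree < N) :
    p.eval x = ∑ l ∈ Finset.range N, (taylor r p).coeff l * (x - r) ^ l := by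
  rw [← taylor_eval_sub r, eval_eq_sum_range' (by rwa [natDegree_taylor])]

end Taylor

section JacobiDerivatives

/-- The derivative `(P_n^{(α,β)})^{(k)}(1)`. -/
noncomputable def jacobiDeriv (α β : ℝ) (n k : ℕ) : ℝ :=
  (derivative^[k] (jacobiP α β n)).eval 1

variable {α β : ℝ}

lemma jacobiP_eq_sum_ringChoose (hα : -1 < α) (hβ : -1 < β) (n : ℕ) :
    jacobiP α β n = ∑ k ∈ Finset.range (n + 1),
      C (Ring.choose (n + α) (n - k) * Ring.choose (n + β) k) *
        (C 2⁻¹ * (X - 1)) ^ k * (C 2⁻¹ * (X + 1)) ^ (n - k) := by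
  refine Finset.sum_congr rfl fun k hk => ?_
  have hkn : k ≤ n := Finset.mem_range_succ_iff.1 hk
  have hkn' : (k : ℝ) ≤ n := mod_cast hkn
  have : (0 : ℝ) ≤ k := k.cast_nonneg
  rw [ringChoose_eq_Gamma_div (by rw [Nat.cast_sub hkn]; linarith),
    ringChoose_eq_Gamma_div (by linarith), ← Real.Gamma_nat_eq_factorial,
    ← Real.Gamma_nat_eq_factorial, Nat.cast_sub hkn]
  ring_nf

lemma coeff_taylor_jacobiP (hα : -1 < α) (hβ : -1 < β) (n m : ℕ) :
    (taylor 1 (jacobiP α β n)).coeff m = ∑ k ∈ Finset.range (n + 1),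
      if k ≤ m then Ring.choose (n + α) (n - k) * Ring.choose (n + β) k *
        ((n - k).choose (m - k) : ℝ) * 2⁻¹ ^ m else 0 := by
  have hsub : taylor 1 (C (2⁻¹ : ℝ) * (X - 1)) = C 2⁻¹ * X := by simp [taylor_apply]
  have hadd : taylor 1 (C (2⁻¹ : ℝ) * (X + 1)) = C 2⁻¹ * X + 1 := by
    have h : C (2⁻¹ : ℝ) * 2 = 1 := by rw [← C_ofNat, ← C_mul]; norm_num
    rw [taylor_apply, mul_comp, add_comp, C_comp, X_comp, one_comp, C_1]
    linear_combination h
  simp only [jacobiP_eq_sum_ringChoose hα hβ, map_sum, finsetSum_coeff, taylor_mul, taylor_pow,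
    taylor_C, hsub, hadd, mul_assoc, coeff_C_mul, coeff_C_mul_X_pow_mul_add_one_pow, mul_ite,
    mul_zero]

lemma coeff_taylor_jacobiP_of_le (hα : -1 < α) (hβ : -1 < β) {n m : ℕ} (hm : m ≤ n) :
    (taylor 1 (jacobiP α β n)).coeff m =
      Ring.choose (n + α) (n - m) * Ring.choose (n + m + α + β) m / 2 ^ m := by
  rw [coeff_taylor_jacobiP hα hβ, ← Finset.sum_filter,
    show (Finset.range (n + 1)).filter (· ≤ m) = Finset.range (m + 1) by ext; simp; lia,
    ← Finset.sum_mul, sum_ringChoose_mul_ringChoose_mul_choose _ _ hm,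
    show (n : ℝ) + α + (n + β) + m - n = n + m + α + β by ring, inv_pow, div_eq_mul_inv]

lemma natDegree_jacobiP_le (hα : -1 < α) (hβ : -1 < β) (n : ℕ) :
    (jacobiP α β n).natDegree ≤ n := by
  rw [← natDegree_taylor _ 1, natDegree_le_iff_coeff_eq_zero]
  intro m hm
  rw [coeff_taylor_jacobiP hα hβ]
  refine Finset.sum_eq_zero fun k hk => ?_
  have hkm : n - k < m - k := by grind
  simp [Nat.choose_eq_zero_of_lt hkm]

lemma jacobiDeriv_eq (hα : -1 < α) (hβ : -1 < β) {n k : ℕ} (hk : k ≤ n) :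
    jacobiDeriv α β n k = k.factorial / 2 ^ k *
      (Ring.choose (n + α) (n - k) * Ring.choose (n + k + α + β) k) := by
  rw [jacobiDeriv, iterate_derivative_eval_eq_factorial_mul_coeff_taylor,
    coeff_taylor_jacobiP_of_le hα hβ hk]
  ring

lemma jacobiDeriv_eq_zero (hα : -1 < α) (hβ : -1 < β) {n k : ℕ} (hk : n < k) :
    jacobiDeriv α β n k = 0 := by
  rw [jacobiDeriv, iterate_derivative_eq_zero ((natDegree_jacobiP_le hα hβ n).trans_lt hk),
    eval_zero]

lemma jacobiDeriv_pos (hα : -1 < α) (hβ : -1 < β) {n k : ℕ} (hk : k ≤ n) :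
    0 < jacobiDeriv α β n k := by
  have hkn : (k : ℝ) ≤ n := mod_cast hk
  have : (0 : ℝ) ≤ k := k.cast_nonneg
  have hleft : 0 < Ring.choose ((n : ℝ) + α) (n - k) :=
    ringChoose_pos (by rw [Nat.cast_sub hk]; linarith)
  have hright : 0 < Ring.choose ((n : ℝ) + k + α + β) k := by
    rcases Nat.eq_zero_or_pos k with rfl | hk1
    · rw [Ring.choose_zero_right]
      exact one_pos
    · have hk1' : (1 : ℝ) ≤ k := mod_cast hk1
      exact ringChoose_pos (by linarith)
  rw [jacobiDeriv_eq hα hβ hk]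
  positivity

lemma jacobiDeriv_nonneg (hα : -1 < α) (hβ : -1 < β) (n k : ℕ) : 0 ≤ jacobiDeriv α β n k := by
  rcases le_or_gt k n with hk | hk
  · exact (jacobiDeriv_pos hα hβ hk).le
  · exact (jacobiDeriv_eq_zero hα hβ hk).ge

/-- Equivalent to the value at `1` of the `k`-th derivative of the Jacobi differential equation. -/
lemma jacobiDeriv_succ (hα : -1 < α) (hβ : -1 < β) (n k : ℕ) :
    2 * (α + k + 1) * jacobiDeriv α β n (k + 1) =
      (n - k) * (n + k + α + β + 1) * jacobiDeriv α β n k := by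
  rcases lt_trichotomy k n with hk | rfl | hk
  · obtain ⟨l, rfl⟩ : ∃ l, n = k + l + 1 := ⟨n - k - 1, by lia⟩
    have : α + k + 1 ≠ 0 := by linarith [(k.cast_nonneg : (0 : ℝ) ≤ k)]
    rw [jacobiDeriv_eq hα hβ hk.le, jacobiDeriv_eq hα hβ (show k + 1 ≤ k + l + 1 by lia),
      show k + l + 1 - k = l + 1 by lia, show k + l + 1 - (k + 1) = l by lia, ringChoose_succ _ l,
      show ((k + l + 1 : ℕ) : ℝ) + (k + 1 : ℕ) + α + β = (k + l + 1 : ℕ) + k + α + β + 1 by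
        push_cast; ring,
      ringChoose_add_one_succ, Nat.factorial_succ]
    push_cast
    field_simp
    ring
  · rw [jacobiDeriv_eq_zero hα hβ k.lt_succ_self]
    ring
  · rw [jacobiDeriv_eq_zero hα hβ hk, jacobiDeriv_eq_zero hα hβ (hk.trans k.lt_succ_self)]
    ring

end JacobiDerivatives

section Kernel

variable {α β : ℝ}

lemma jacobiDeriv_mul_le_mul (hα : -1 < α) (hβ : -1 < β) {i n j k : ℕ} (hin : i ≤ n) (hjk : j ≤ k) :
    jacobiDeriv α β i k * jacobiDeriv α β n j ≤ jacobiDeriv α β i j * jacobiDeriv α β n k := by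
  induction k, hjk using Nat.le_induction with
  | base => exact le_rfl
  | succ k _ ih =>
    rcases Nat.lt_or_ge i (k + 1) with hik | hki
    · rw [jacobiDeriv_eq_zero hα hβ hik, zero_mul]
      exact mul_nonneg (jacobiDeriv_nonneg hα hβ i j) (jacobiDeriv_nonneg hα hβ n (k + 1))
    have : (0 : ℝ) ≤ k := k.cast_nonneg
    have hki' : (k : ℝ) + 1 ≤ i := mod_cast hki
    have hin' : (i : ℝ) ≤ n := mod_cast hin
    refine le_of_mul_le_mul_left ?_ (show 0 < 2 * (α + k + 1) by linarith)
    calc 2 * (α + k + 1) * (jacobiDeriv α β i (k + 1) * jacobiDeriv α β n j)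
        = (i - k) * (i + k + α + β + 1) * (jacobiDeriv α β i k * jacobiDeriv α β n j) := by
          linear_combination jacobiDeriv α β n j * jacobiDeriv_succ hα hβ i k
      _ ≤ (n - k) * (n + k + α + β + 1) * (jacobiDeriv α β i j * jacobiDeriv α β n k) := by
          gcongr
          · exact mul_nonneg (jacobiDeriv_nonneg hα hβ i k) (jacobiDeriv_nonneg hα hβ n j)
          all_goals nlinarith
      _ = 2 * (α + k + 1) * (jacobiDeriv α β i j * jacobiDeriv α β n (k + 1)) := by
          linear_combination -jacobiDeriv α β i j * jacobiDeriv_succ hα hβ n k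

lemma jacobiNormSq_nonneg (α β : ℝ) (n : ℕ) : 0 ≤ jacobiNormSq α β n := by
  refine intervalIntegral.integral_nonneg (by norm_num) fun x hx => ?_
  have hleft : 0 ≤ 1 - x := sub_nonneg.2 hx.2
  have hright : 0 ≤ 1 + x := by linarith [hx.1]
  positivity

lemma kernK_one_one (α β : ℝ) (j k n : ℕ) :
    kernK α β j k n 1 1 = ∑ i ∈ Finset.range (n + 1),
      jacobiDeriv α β i j * jacobiDeriv α β i k / jacobiNormSq α β i := rfl

lemma kernK_one_one_nonneg (hα : -1 < α) (hβ : -1 < β) (j k n : ℕ) :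
    0 ≤ kernK α β j k n 1 1 :=
  Finset.sum_nonneg fun i _ =>
    div_nonneg (mul_nonneg (jacobiDeriv_nonneg hα hβ i j) (jacobiDeriv_nonneg hα hβ i k))
      (jacobiNormSq_nonneg α β i)

lemma kernK_one_one_mul_jacobiDeriv_le (hα : -1 < α) (hβ : -1 < β) (l : ℕ) {N n j k : ℕ}
    (hN : N ≤ n) (hjk : j ≤ k) :
    kernK α β l k N 1 1 * jacobiDeriv α β n j ≤ kernK α β l j N 1 1 * jacobiDeriv α β n k := by
  simp only [kernK_one_one, Finset.sum_mul]
  refine Finset.sum_le_sum fun i hi => ?_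
  have hin : i ≤ n := (Finset.mem_range_succ_iff.1 hi).trans hN
  have hweight : 0 ≤ jacobiDeriv α β i l / jacobiNormSq α β i :=
    div_nonneg (jacobiDeriv_nonneg hα hβ i l) (jacobiNormSq_nonneg α β i)
  calc jacobiDeriv α β i l * jacobiDeriv α β i k / jacobiNormSq α β i * jacobiDeriv α β n j
      = jacobiDeriv α β i l / jacobiNormSq α β i *
          (jacobiDeriv α β i k * jacobiDeriv α β n j) := by ring
    _ ≤ jacobiDeriv α β i l / jacobiNormSq α β i *
          (jacobiDeriv α β i j * jacobiDeriv α β n k) :=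
        mul_le_mul_of_nonneg_left (jacobiDeriv_mul_le_mul hα hβ hin hjk) hweight
    _ = jacobiDeriv α β i l * jacobiDeriv α β i j / jacobiNormSq α β i * jacobiDeriv α β n k := by
        ring

end Kernel

section BetaIntegral

variable {a b : ℝ}

lemma ofReal_cpow_mul_one_sub_cpow (a b : ℝ) {u : ℝ} (hu : u ∈ Set.Icc (0 : ℝ) 1) :
    (u : ℂ) ^ (((a + 1 : ℝ) : ℂ) - 1) * (1 - (u : ℂ)) ^ (((b + 1 : ℝ) : ℂ) - 1) =
      ((u ^ a * (1 - u) ^ b : ℝ) : ℂ) := by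
  rw [Complex.ofReal_mul, Complex.ofReal_cpow hu.1, Complex.ofReal_cpow (sub_nonneg.2 hu.2)]
  push_cast
  simp only [add_sub_cancel_right]

lemma intervalIntegrable_rpow_mul_one_sub_rpow (ha : -1 < a) (hb : -1 < b) :
    IntervalIntegrable (fun u : ℝ => u ^ a * (1 - u) ^ b) MeasureTheory.volume 0 1 := by
  have hcomplex := (Complex.betaIntegral_convergent (u := (a + 1 : ℝ)) (v := (b + 1 : ℝ))
    (by rw [Complex.ofReal_re]; linarith) (by rw [Complex.ofReal_re]; linarith)).norm
  refine hcomplex.congr fun u hu => ?_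
  rw [Set.uIoc_of_le zero_le_one] at hu
  simp only [ofReal_cpow_mul_one_sub_cpow a b (Set.Ioc_subset_Icc_self hu), Complex.norm_real]
  exact Real.norm_of_nonneg
    (mul_nonneg (Real.rpow_nonneg hu.1.le a) (Real.rpow_nonneg (sub_nonneg.2 hu.2) b))

lemma integral_rpow_mul_one_sub_rpow (ha : -1 < a) (hb : -1 < b) :
    ∫ u in (0 : ℝ)..1, u ^ a * (1 - u) ^ b =
      Real.Gamma (a + 1) * Real.Gamma (b + 1) / Real.Gamma (a + b + 2) := by
  have hcomplex : Complex.betaIntegral (a + 1 : ℝ) (b + 1 : ℝ) =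
      ((∫ u in (0 : ℝ)..1, u ^ a * (1 - u) ^ b : ℝ) : ℂ) := by
    rw [← intervalIntegral.integral_ofReal]
    refine intervalIntegral.integral_congr fun u hu => ?_
    rw [Set.uIcc_of_le zero_le_one] at hu
    exact ofReal_cpow_mul_one_sub_cpow a b hu
  have hbeta := ProbabilityTheory.beta_eq_betaIntegralReal (a + 1) (b + 1)
    (by linarith) (by linarith)
  rw [hcomplex, Complex.ofReal_re, ProbabilityTheory.beta,
    show a + 1 + (b + 1) = a + b + 2 by ring] at hbeta
  exact hbeta.symm

lemma integral_pow_mul_one_sub_pow_mul_rpow_mul_one_sub_rpow (ha : -1 < a) (hb : -1 < b)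
    (k l : ℕ) :
    ∫ u in (0 : ℝ)..1, u ^ k * (1 - u) ^ l * (u ^ a * (1 - u) ^ b) =
      Real.Gamma (a + k + 1) * Real.Gamma (b + l + 1) / Real.Gamma (a + b + k + l + 2) := by
  have : (0 : ℝ) ≤ k := k.cast_nonneg
  have : (0 : ℝ) ≤ l := l.cast_nonneg
  have habs : ∀ u ∈ Set.Ioo (0 : ℝ) 1, u ^ k * (1 - u) ^ l * (u ^ a * (1 - u) ^ b) =
      u ^ (a + k) * (1 - u) ^ (b + l) := fun u hu => by
    rw [Real.rpow_add_natCast hu.1.ne', Real.rpow_add_natCast (sub_pos.2 hu.2).ne']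
    ring
  rw [show a + b + k + l + 2 = a + k + (b + l) + 2 by ring,
    ← integral_rpow_mul_one_sub_rpow (by linarith) (by linarith),
    intervalIntegral.integral_of_le zero_le_one, intervalIntegral.integral_of_le zero_le_one,
    MeasureTheory.integral_Ioc_eq_integral_Ioo, MeasureTheory.integral_Ioc_eq_integral_Ioo]
  exact MeasureTheory.setIntegral_congr_fun measurableSet_Ioo habs

end BetaIntegral

section FiniteDifferences

lemma sum_neg_one_pow_mul_choose_mul_eval {R : Type*} [CommRing R] {f : R[X]} {n : ℕ}
    (hf : f.natDegree ≤ n) (y : R) :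
    ∑ k ∈ Finset.range (n + 1), (-1) ^ k * (n.choose k : R) * f.eval (y + k) =
      (-1) ^ n * n.factorial * f.coeff n := by
  have hdiff : (fwdDiff 1)^[n] f.eval y = n.factorial * f.coeff n := by
    rcases hf.lt_or_eq with hlt | rfl
    · rw [Polynomial.fwdDiff_iter_eq_zero_of_degree_lt hlt, coeff_eq_zero_of_natDegree_lt hlt]
      simp
    · rw [Polynomial.fwdDiff_iter_degree_eq_factorial]
      simp [mul_comm]
  rw [mul_assoc, ← hdiff, fwdDiff_iter_eq_sum_shift, Finset.mul_sum]
  refine Finset.sum_congr rfl fun k hk => ?_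
  have hsign : (-1 : R) ^ n * (-1) ^ (n - k) = (-1) ^ k := by
    rw [← pow_add, show n + (n - k) = k + 2 * (n - k) by grind, pow_add, pow_mul, neg_one_sq,
      one_pow, mul_one]
  rw [← hsign]
  simp [mul_assoc]

lemma Gamma_add_natCast {x : ℝ} (hx : 0 < x) (l : ℕ) :
    Real.Gamma (x + l) = Real.Gamma x * (ascPochhammer ℝ l).eval x := by
  induction l with
  | zero => simp
  | succ l ih =>
    have hxl : x + l ≠ 0 := by positivity
    rw [Nat.cast_succ, ← add_assoc, Real.Gamma_add_one hxl, ih, ascPochhammer_succ_eval]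
    ring

end FiniteDifferences

section JacobiOrthogonality

variable {α β : ℝ}

lemma eval_jacobiP_one_sub_two_mul (hα : -1 < α) (hβ : -1 < β) (n : ℕ) (u : ℝ) :
    (jacobiP α β n).eval (1 - 2 * u) = ∑ k ∈ Finset.range (n + 1),
      (-1) ^ k * (Ring.choose (n + α) (n - k) * Ring.choose (n + β) k) *
        (u ^ k * (1 - u) ^ (n - k)) := by
  rw [jacobiP_eq_sum_ringChoose hα hβ, eval_finsetSum]
  refine Finset.sum_congr rfl fun k _ => ?_
  simp only [eval_mul, eval_pow, eval_C, eval_sub, eval_add, eval_X, eval_one]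
  rw [show (2⁻¹ : ℝ) * (1 - 2 * u - 1) = -1 * u by ring,
    show (2⁻¹ : ℝ) * (1 - 2 * u + 1) = 1 - u by ring, mul_pow]
  ring

lemma ringChoose_mul_ringChoose_mul_Gamma_mul_Gamma (hα : -1 < α) (hβ : -1 < β) {k n : ℕ}
    (hk : k ≤ n) (l : ℕ) :
    Ring.choose (n + α) (n - k) * Ring.choose (n + β) k *
        (Real.Gamma (α + (k + l : ℕ) + 1) * Real.Gamma (β + (n - k : ℕ) + 1)) =
      Real.Gamma (n + α + 1) * Real.Gamma (n + β + 1) / n.factorial *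
        (n.choose k * (ascPochhammer ℝ l).eval (α + 1 + k)) := by
  have hkn : (k : ℝ) ≤ n := mod_cast hk
  have : (0 : ℝ) ≤ k := k.cast_nonneg
  have hΓα : Real.Gamma (α + 1 + k) ≠ 0 := (Real.Gamma_pos_of_pos (by linarith)).ne'
  have hΓβ : Real.Gamma (n + β - k + 1) ≠ 0 := (Real.Gamma_pos_of_pos (by linarith)).ne'
  have hfact : ((n.choose k * k.factorial * (n - k).factorial : ℕ) : ℝ) = n.factorial :=
    congrArg _ (Nat.choose_mul_factorial_mul_factorial hk)
  rw [ringChoose_eq_Gamma_div (by rw [Nat.cast_sub hk]; linarith),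
    ringChoose_eq_Gamma_div (by linarith), Nat.cast_add, Nat.cast_sub hk,
    show α + (k + l) + 1 = α + 1 + k + l by ring, Gamma_add_natCast (by linarith),
    show (n : ℝ) + α - (n - k) + 1 = α + 1 + k by ring,
    show β + (n - k) + 1 = (n : ℝ) + β - k + 1 by ring, ← hfact]
  have hchoose : (n.choose k : ℝ) ≠ 0 := mod_cast (Nat.choose_pos hk).ne'
  push_cast
  field_simp

lemma integral_jacobiP_mul_pow (hα : -1 < α) (hβ : -1 < β) {l n : ℕ} (hl : l ≤ n) :
    ∫ u in (0 : ℝ)..1, (jacobiP α β n).eval (1 - 2 * u) * u ^ l * (u ^ α * (1 - u) ^ β) =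
      if l = n then (-1) ^ n * (Real.Gamma (n + α + 1) * Real.Gamma (n + β + 1)) /
        Real.Gamma (2 * n + α + β + 2) else 0 := by
  have hexpand : ∀ u : ℝ,
      (jacobiP α β n).eval (1 - 2 * u) * u ^ l * (u ^ α * (1 - u) ^ β) =
      ∑ k ∈ Finset.range (n + 1),
        (-1) ^ k * (Ring.choose (n + α) (n - k) * Ring.choose (n + β) k) *
          (u ^ (k + l) * (1 - u) ^ (n - k) * (u ^ α * (1 - u) ^ β)) := fun u => by
    rw [eval_jacobiP_one_sub_two_mul hα hβ, Finset.sum_mul, Finset.sum_mul]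
    exact Finset.sum_congr rfl fun k _ => by ring
  have hintegrable : ∀ k ∈ Finset.range (n + 1), IntervalIntegrable (fun u : ℝ =>
      (-1) ^ k * (Ring.choose (n + α) (n - k) * Ring.choose (n + β) k) *
        (u ^ (k + l) * (1 - u) ^ (n - k) * (u ^ α * (1 - u) ^ β))) MeasureTheory.volume 0 1 :=
    fun k _ => ((intervalIntegrable_rpow_mul_one_sub_rpow hα hβ).continuousOn_mul
      (by fun_prop)).const_mul _
  have hcoeff : (ascPochhammer ℝ l).coeff n = if l = n then 1 else 0 := by
    split_ifs with h
    · subst h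
      simpa [ascPochhammer_natDegree] using (monic_ascPochhammer ℝ l).coeff_natDegree
    · exact coeff_eq_zero_of_natDegree_lt (by rw [ascPochhammer_natDegree]; lia)
  calc ∫ u in (0 : ℝ)..1, (jacobiP α β n).eval (1 - 2 * u) * u ^ l * (u ^ α * (1 - u) ^ β)
      = ∑ k ∈ Finset.range (n + 1),
          (-1) ^ k * (Ring.choose (n + α) (n - k) * Ring.choose (n + β) k *
            (Real.Gamma (α + (k + l : ℕ) + 1) * Real.Gamma (β + (n - k : ℕ) + 1))) /
            Real.Gamma (α + β + n + l + 2) := by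
        simp only [hexpand]
        rw [intervalIntegral.integral_finsetSum hintegrable]
        refine Finset.sum_congr rfl fun k hk => ?_
        have hkn : k ≤ n := Finset.mem_range_succ_iff.1 hk
        rw [intervalIntegral.integral_const_mul,
          integral_pow_mul_one_sub_pow_mul_rpow_mul_one_sub_rpow hα hβ,
          show α + β + (k + l : ℕ) + (n - k : ℕ) + 2 = α + β + n + l + 2 by
            rw [Nat.cast_sub hkn]; push_cast; ring]
        ring
    _ = Real.Gamma (n + α + 1) * Real.Gamma (n + β + 1) / n.factorial /
          Real.Gamma (α + β + n + l + 2) * ∑ k ∈ Finset.range (n + 1),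
            (-1) ^ k * (n.choose k : ℝ) * (ascPochhammer ℝ l).eval (α + 1 + k) := by
        rw [Finset.mul_sum]
        refine Finset.sum_congr rfl fun k hk => ?_
        rw [ringChoose_mul_ringChoose_mul_Gamma_mul_Gamma hα hβ (Finset.mem_range_succ_iff.1 hk)]
        ring
    _ = _ := by
        rw [sum_neg_one_pow_mul_choose_mul_eval (by rwa [ascPochhammer_natDegree]), hcoeff]
        split_ifs with h
        · subst h
          rw [show α + β + l + l + 2 = 2 * l + α + β + 2 by ring]
          field_simp
        · simp

lemma integral_jacobiP_mul_eval (hα : -1 < α) (hβ : -1 < β) {n : ℕ} {q : ℝ[X]}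
    (hq : q.natDegree ≤ n) :
    ∫ u in (0 : ℝ)..1, (jacobiP α β n).eval (1 - 2 * u) * q.eval (1 - 2 * u) *
        (u ^ α * (1 - u) ^ β) =
      2 ^ n * (taylor 1 q).coeff n * (Real.Gamma (n + α + 1) * Real.Gamma (n + β + 1)) /
        Real.Gamma (2 * n + α + β + 2) := by
  have hexpand : ∀ u : ℝ, (jacobiP α β n).eval (1 - 2 * u) * q.eval (1 - 2 * u) *
        (u ^ α * (1 - u) ^ β) =
      ∑ l ∈ Finset.range (n + 1), (-2) ^ l * (taylor 1 q).coeff l *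
        ((jacobiP α β n).eval (1 - 2 * u) * u ^ l * (u ^ α * (1 - u) ^ β)) := fun u => by
    rw [eval_eq_sum_coeff_taylor_mul_pow q 1 _ (Nat.lt_succ_of_le hq), Finset.mul_sum,
      Finset.sum_mul]
    refine Finset.sum_congr rfl fun l _ => ?_
    rw [show 1 - 2 * u - 1 = -2 * u by ring, mul_pow]
    ring
  have hintegrable : ∀ l ∈ Finset.range (n + 1), IntervalIntegrable (fun u : ℝ =>
      (-2) ^ l * (taylor 1 q).coeff l *
        ((jacobiP α β n).eval (1 - 2 * u) * u ^ l * (u ^ α * (1 - u) ^ β)))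
      MeasureTheory.volume 0 1 :=
    fun l _ => ((intervalIntegrable_rpow_mul_one_sub_rpow hα hβ).continuousOn_mul
      (by fun_prop)).const_mul _
  have hsign : (-2 : ℝ) ^ n * (-1) ^ n = 2 ^ n := by rw [← mul_pow]; norm_num
  simp only [hexpand]
  rw [intervalIntegral.integral_finsetSum hintegrable, Finset.sum_eq_single_of_mem n (by simp),
    intervalIntegral.integral_const_mul, integral_jacobiP_mul_pow hα hβ le_rfl, if_pos rfl, ← hsign]
  · ring
  · intro l hl hln
    rw [intervalIntegral.integral_const_mul,
      integral_jacobiP_mul_pow hα hβ (Finset.mem_range_succ_iff.1 hl), if_neg hln, mul_zero]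

lemma jacobiNormSq_eq_integral_unitInterval (α β : ℝ) (n : ℕ) :
    jacobiNormSq α β n = 2 ^ (α + β + 1) * ∫ u in (0 : ℝ)..1,
      (jacobiP α β n).eval (1 - 2 * u) ^ 2 * (u ^ α * (1 - u) ^ β) := by
  have hscale : ∀ u ∈ Set.uIcc (0 : ℝ) 1,
      2 * ((jacobiP α β n).eval (1 - 2 * u) ^ 2 * (1 - (1 - 2 * u)) ^ α *
        (1 + (1 - 2 * u)) ^ β) =
      2 ^ (α + β + 1) * ((jacobiP α β n).eval (1 - 2 * u) ^ 2 * (u ^ α * (1 - u) ^ β)) := by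
    intro u hu
    rw [Set.uIcc_of_le zero_le_one] at hu
    rw [show 1 - (1 - 2 * u) = 2 * u by ring, show 1 + (1 - 2 * u) = 2 * (1 - u) by ring,
      Real.mul_rpow zero_le_two hu.1, Real.mul_rpow zero_le_two (sub_nonneg.2 hu.2),
      Real.rpow_add two_pos, Real.rpow_add two_pos, Real.rpow_one]
    ring
  calc jacobiNormSq α β n
      = 2 * ∫ u in (0 : ℝ)..1, (jacobiP α β n).eval (1 - 2 * u) ^ 2 * (1 - (1 - 2 * u)) ^ α *
          (1 + (1 - 2 * u)) ^ β := by
        rw [intervalIntegral.mul_integral_comp_sub_mul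
          (f := fun x : ℝ => (jacobiP α β n).eval x ^ 2 * (1 - x) ^ α * (1 + x) ^ β)]
        norm_num [jacobiNormSq]
    _ = _ := by
        rw [← intervalIntegral.integral_const_mul, ← intervalIntegral.integral_const_mul]
        exact intervalIntegral.integral_congr hscale

lemma jacobiNormSq_eq (hα : -1 < α) (hβ : -1 < β) (n : ℕ) :
    jacobiNormSq α β n = 2 ^ (α + β + 1) * Ring.choose (2 * n + α + β) n *
      (Real.Gamma (n + α + 1) * Real.Gamma (n + β + 1)) / Real.Gamma (2 * n + α + β + 2) := by
  have hlead : (taylor 1 (jacobiP α β n)).coeff n = Ring.choose (2 * n + α + β) n / 2 ^ n := by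
    rw [coeff_taylor_jacobiP_of_le hα hβ le_rfl, Nat.sub_self, Ring.choose_zero_right, one_mul,
      ← two_mul]
  rw [jacobiNormSq_eq_integral_unitInterval]
  simp only [sq]
  rw [integral_jacobiP_mul_eval hα hβ (natDegree_jacobiP_le hα hβ n), hlead]
  field_simp

lemma jacobiNormSq_eq_of_pos (hα : -1 < α) (hβ : -1 < β) {n : ℕ} (hn : 0 < n) :
    jacobiNormSq α β n = 2 ^ (α + β + 1) * (Real.Gamma (n + α + 1) * Real.Gamma (n + β + 1)) /
      ((2 * n + α + β + 1) * (Real.Gamma (n + 1) * Real.Gamma (n + (α + β) + 1))) := by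
  have hn1 : (1 : ℝ) ≤ n := mod_cast hn
  have hΓ : Real.Gamma (2 * n + α + β + 1) ≠ 0 := (Real.Gamma_pos_of_pos (by linarith)).ne'
  rw [jacobiNormSq_eq hα hβ, ringChoose_eq_Gamma_div (by linarith),
    show 2 * n + α + β + 2 = 2 * n + α + β + 1 + 1 by ring,
    Real.Gamma_add_one (s := 2 * n + α + β + 1) (by linarith),
    Real.Gamma_nat_eq_factorial, show 2 * n + α + β - n + 1 = n + (α + β) + 1 by ring]
  field_simp

end JacobiOrthogonality

section Asymptotics

open Asymptotics

lemma natCast_add_isEquivalent (c : ℝ) :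
    (fun n : ℕ => (n : ℝ) + c) ~[atTop] fun n => (n : ℝ) :=
  IsEquivalent.refl.add_const_of_norm_tendsto_atTop
    (tendsto_norm_atTop_atTop.comp tendsto_natCast_atTop_atTop)

lemma eval_ascPochhammer_eq_prod_range (x : ℝ) (l : ℕ) :
    (ascPochhammer ℝ l).eval x = ∏ i ∈ Finset.range l, (x + i) := by
  induction l with
  | zero => simp
  | succ l ih => rw [ascPochhammer_succ_eval, ih, Finset.prod_range_succ]

lemma Gamma_natCast_add_isEquivalent_of_pos {s : ℝ} (hs : 0 < s) :
    (fun n : ℕ => Real.Gamma (n + s + 1)) ~[atTop] fun n => n.factorial * (n : ℝ) ^ s := by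
  have hΓ := (Real.Gamma_pos_of_pos hs).ne'
  refine (isEquivalent_of_tendsto_one ?_).symm
  have hseq := (Real.GammaSeq_tendsto_Gamma s).div_const (Real.Gamma s)
  rw [div_self hΓ] at hseq
  refine hseq.congr fun n => ?_
  have hprod : Real.Gamma (n + s + 1) =
      Real.Gamma s * ∏ i ∈ Finset.range (n + 1), (s + i) := by
    rw [← eval_ascPochhammer_eq_prod_range, ← Gamma_add_natCast hs]
    congr 1
    push_cast
    ring
  rw [Pi.div_apply, hprod, Real.GammaSeq, div_div]
  ring

lemma Gamma_natCast_add_isEquivalent (s : ℝ) :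
    (fun n : ℕ => Real.Gamma (n + s + 1)) ~[atTop] fun n => n.factorial * (n : ℝ) ^ s := by
  obtain ⟨m, hm⟩ := exists_nat_gt (-s)
  induction m generalizing s with
  | zero => exact Gamma_natCast_add_isEquivalent_of_pos (by simpa using hm)
  | succ m ih =>
    have hshift :=
      (ih (s + 1) (by push_cast at hm; linarith)).div (natCast_add_isEquivalent (s + 1))
    refine (hshift.congr_left ?_).congr_right ?_
    · filter_upwards [tendsto_natCast_atTop_atTop.eventually_gt_atTop (-s - 1)] with n hn
      have hns : (n : ℝ) + s + 1 ≠ 0 := by linarith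
      rw [Pi.div_apply, ← add_assoc, Real.Gamma_add_one hns, mul_div_cancel_left₀ _ hns]
    · filter_upwards [eventually_gt_atTop 0] with n hn
      have hn0 : (n : ℝ) ≠ 0 := by positivity
      rw [Pi.div_apply, Real.rpow_add_one hn0, ← mul_assoc, mul_div_cancel_right₀ _ hn0]

lemma add_one_rpow_sub_rpow_isEquivalent {q : ℝ} (hq : q ≠ 0) :
    (fun n : ℕ => ((n : ℝ) + 1) ^ q - (n : ℝ) ^ q) ~[atTop] fun n => q * (n : ℝ) ^ (q - 1) := by
  have hderiv : HasDerivAt (fun x : ℝ => x ^ q) q 1 := by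
    simpa using Real.hasDerivAt_rpow_const (x := 1) (p := q) (Or.inl one_ne_zero)
  have hslope := (((hasDerivAt_iff_tendsto_slope_zero.1 hderiv).comp
    (tendsto_inv_atTop_nhdsGT_zero.mono_right (nhdsGT_le_nhdsNE 0))).comp
      (tendsto_natCast_atTop_atTop (R := ℝ))).div_const q
  rw [div_self hq] at hslope
  refine isEquivalent_of_tendsto_one (hslope.congr' ?_)
  filter_upwards [eventually_gt_atTop 0] with n hn
  have hn0 : (0 : ℝ) < n := by positivity
  have hone : (n : ℝ) + 1 = n * (1 + (n : ℝ)⁻¹) := by field_simp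
  simp only [Function.comp_apply, Pi.div_apply, smul_eq_mul, inv_inv, Real.one_rpow]
  rw [hone, Real.mul_rpow hn0.le (by positivity), Real.rpow_sub_one hn0.ne']
  field_simp

lemma sum_range_isEquivalent_sum_range {f g : ℕ → ℝ} (hfg : f ~[atTop] g) (hg : 0 ≤ g)
    (hsum : Tendsto (fun n => ∑ i ∈ Finset.range n, g i) atTop atTop) :
    (fun n => ∑ i ∈ Finset.range n, f i) ~[atTop] fun n => ∑ i ∈ Finset.range n, g i :=
  (hfg.isLittleO.sum_range hg hsum).congr_left fun n => by
    simp only [Pi.sub_apply, Finset.sum_sub_distrib]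

lemma sum_range_isEquivalent_rpow {f : ℕ → ℝ} {c q : ℝ} (hc : 0 < c) (hq : 0 < q)
    (hf : f ~[atTop] fun n => c * (n : ℝ) ^ (q - 1)) :
    (fun n => ∑ i ∈ Finset.range n, f i) ~[atTop] fun n => c / q * (n : ℝ) ^ q := by
  let g : ℕ → ℝ := fun n => c / q * (((n : ℝ) + 1) ^ q - (n : ℝ) ^ q)
  have hfg : f ~[atTop] g := by
    refine hf.trans ?_
    refine ((IsEquivalent.refl.mul (add_one_rpow_sub_rpow_isEquivalent hq.ne')).congr_right
      (.of_eq ?_)).symm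
    ext n
    simp only [Pi.mul_apply]
    field_simp
  have hg : 0 ≤ g := fun n => mul_nonneg (div_pos hc hq).le
    (sub_nonneg.2 (Real.rpow_le_rpow n.cast_nonneg (by linarith) hq.le))
  have hsum : (fun n => ∑ i ∈ Finset.range n, g i) = fun n : ℕ => c / q * (n : ℝ) ^ q := by
    ext n
    rw [← Finset.mul_sum]
    simpa [Real.zero_rpow hq.ne'] using
      congrArg (c / q * ·) (Finset.sum_range_sub (fun i : ℕ => (i : ℝ) ^ q) n)
  rw [← hsum]
  refine sum_range_isEquivalent_sum_range hfg hg ?_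
  rw [hsum]
  exact ((tendsto_rpow_atTop hq).comp tendsto_natCast_atTop_atTop).const_mul_atTop (div_pos hc hq)

end Asymptotics

section JacobiAsymptotics

open Asymptotics

variable {α β : ℝ}

lemma Gamma_add_natCast_add_one_pos (hα : -1 < α) (k : ℕ) : 0 < Real.Gamma (α + k + 1) :=
  Real.Gamma_pos_of_pos (by linarith [k.cast_nonneg (α := ℝ)])

lemma jacobiDeriv_isEquivalent (hα : -1 < α) (hβ : -1 < β) (k : ℕ) :
    (fun n => jacobiDeriv α β n k) ~[atTop]
      fun n => (n : ℝ) ^ (α + 2 * k) / (2 ^ k * Real.Gamma (α + k + 1)) := by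
  induction k with
  | zero =>
    have h := (Gamma_natCast_add_isEquivalent α).div
      (IsEquivalent.refl (u := fun n : ℕ => n.factorial * Real.Gamma (α + 1)))
    refine (h.congr_left (.of_eq ?_)).congr_right (.of_eq ?_)
    · ext n
      rw [jacobiDeriv_eq hα hβ n.zero_le, Nat.sub_zero, ringChoose_eq_Gamma_div (by linarith)]
      simp
    · ext n
      have hn : (n.factorial : ℝ) ≠ 0 := by positivity
      simp [mul_div_mul_left _ _ hn]
  | succ k ih =>
    have hαk : 0 < α + k + 1 := by linarith [k.cast_nonneg (α := ℝ)]
    have h := (((natCast_add_isEquivalent (-k)).mul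
      (natCast_add_isEquivalent (k + α + β + 1))).mul ih).div
      (IsEquivalent.refl (u := fun _ : ℕ => 2 * (α + k + 1)))
    refine (h.congr_left (.of_eq ?_)).congr_right ?_
    · ext n
      simp only [Pi.mul_apply, Pi.div_apply]
      rw [div_eq_iff (by positivity), mul_comm _ (2 * _), jacobiDeriv_succ hα hβ]
      ring
    · filter_upwards [eventually_gt_atTop 0] with n hn
      have hn0 : (0 : ℝ) < n := by positivity
      simp only [Pi.mul_apply, Pi.div_apply]
      rw [show α + (k + 1 : ℕ) + 1 = α + k + 1 + 1 by push_cast; ring,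
        Real.Gamma_add_one hαk.ne',
        show α + 2 * (k + 1 : ℕ) = α + 2 * k + 1 + 1 by push_cast; ring,
        Real.rpow_add_one hn0.ne', Real.rpow_add_one hn0.ne', pow_succ,
        ← mul_div_assoc, div_div]
      congr 1 <;> ring

lemma jacobiNormSq_isEquivalent (hα : -1 < α) (hβ : -1 < β) :
    (fun n => jacobiNormSq α β n) ~[atTop] fun n => 2 ^ (α + β) / (n : ℝ) := by
  have hΓ := (Gamma_natCast_add_isEquivalent α).mul (Gamma_natCast_add_isEquivalent β)
  have hΓ' := (IsEquivalent.refl (u := fun n : ℕ => (n.factorial : ℝ))).mul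
    (Gamma_natCast_add_isEquivalent (α + β))
  have h := ((IsEquivalent.refl (u := fun _ : ℕ => (2 : ℝ) ^ (α + β))).mul hΓ).div
    ((natCast_add_isEquivalent ((α + β + 1) / 2)).mul hΓ')
  refine (h.congr_left ?_).congr_right ?_
  · filter_upwards [eventually_gt_atTop 0] with n hn
    simp only [Pi.mul_apply, Pi.div_apply]
    rw [jacobiNormSq_eq_of_pos hα hβ hn, Real.rpow_add_one two_ne_zero, Real.Gamma_nat_eq_factorial,
      show 2 * (n : ℝ) + α + β + 1 = 2 * (n + (α + β + 1) / 2) by ring, mul_assoc 2,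
      mul_right_comm, mul_comm _ (2 : ℝ), mul_div_mul_left _ _ two_ne_zero]
  · filter_upwards [eventually_gt_atTop 0] with n hn
    have hn0 : (0 : ℝ) < n := by positivity
    simp only [Pi.mul_apply, Pi.div_apply]
    rw [Real.rpow_add hn0]
    field_simp

lemma kernK_one_one_isEquivalent (hα : -1 < α) (hβ : -1 < β) (j k : ℕ) :
    (fun n => kernK α β j k (n - 1) 1 1) ~[atTop] fun n =>
      1 / (2 ^ (α + β + j + k) * Real.Gamma (α + j + 1) * Real.Gamma (α + k + 1)) /
        (2 * (α + j + k + 1)) * (n : ℝ) ^ (2 * (α + j + k + 1)) := by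
  have hj := Gamma_add_natCast_add_one_pos hα j
  have hk := Gamma_add_natCast_add_one_pos hα k
  have hq : 0 < 2 * (α + j + k + 1) := by
    linarith [j.cast_nonneg (α := ℝ), k.cast_nonneg (α := ℝ)]
  refine (sum_range_isEquivalent_rpow (by positivity) hq ((((jacobiDeriv_isEquivalent hα hβ j).mul
    (jacobiDeriv_isEquivalent hα hβ k)).div (jacobiNormSq_isEquivalent hα hβ)).congr_right
      ?_)).congr_left ?_
  · filter_upwards [eventually_gt_atTop 0] with n hn
    have hn0 : (0 : ℝ) < n := by positivity
    simp only [Pi.mul_apply, Pi.div_apply]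
    rw [show 2 * (α + j + k + 1) - 1 = α + 2 * j + (α + 2 * k) + 1 by ring,
      Real.rpow_add_one hn0.ne', Real.rpow_add hn0 (α + 2 * j), Real.rpow_add_natCast two_ne_zero,
      Real.rpow_add_natCast two_ne_zero]
    field_simp
  · filter_upwards [eventually_gt_atTop 0] with n hn
    rw [kernK_one_one, Nat.sub_add_cancel hn]
    rfl

end JacobiAsymptotics

section SobolevDerivatives

open Asymptotics

variable {α β : ℝ} {j : ℕ} {Ms : ℕ → ℝ} {M : ℝ}

lemma natCast_rpow_isLittleO {s t : ℝ} (hst : s < t) :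
    (fun n : ℕ => (n : ℝ) ^ s) =o[atTop] fun n => (n : ℝ) ^ t := by
  have hlim := (tendsto_rpow_neg_atTop (sub_pos.2 hst)).comp tendsto_natCast_atTop_atTop
  refine isLittleO_of_tendsto' ?_ (hlim.congr' ?_)
  · filter_upwards [eventually_gt_atTop 0] with n hn h
    exact absurd h (by positivity)
  · filter_upwards [eventually_gt_atTop 0] with n hn
    rw [Function.comp_apply, neg_sub, Real.rpow_sub (by positivity)]

lemma jacobiDeriv_isLittleO (hα : -1 < α) (hβ : -1 < β) {k : ℕ} (hkj : k < j) :
    (fun n => jacobiDeriv α β n k) =o[atTop] fun n => jacobiDeriv α β n j := by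
  have hΓ := (Gamma_add_natCast_add_one_pos hα j).ne'
  refine ((jacobiDeriv_isEquivalent hα hβ k).isBigO.trans_isLittleO ?_).trans_isBigO
    (jacobiDeriv_isEquivalent hα hβ j).isBigO_symm
  simp only [div_eq_inv_mul]
  exact ((natCast_rpow_isLittleO (by gcongr)).const_mul_left _).const_mul_right (by positivity)

/-- The value at `1` of the `k`-th derivative of the Jacobi–Sobolev polynomial `Q_n`. -/
noncomputable def sobQDeriv (α β : ℝ) (j : ℕ) (Ms : ℕ → ℝ) (n k : ℕ) : ℝ :=
  (derivative^[k] (sobQ α β j Ms n)).eval 1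

lemma iterate_derivative_kernKPoly_eval_one (α β : ℝ) (j k n : ℕ) :
    (derivative^[k] (kernKPoly α β j n)).eval 1 = kernK α β j k n 1 1 := by
  simp only [kernKPoly, kernK, iterate_derivative_sum, iterate_derivative_C_mul, eval_finsetSum,
    eval_mul, eval_C, div_mul_eq_mul_div]

lemma sobQDeriv_eq (α β : ℝ) (j : ℕ) (Ms : ℕ → ℝ) (n k : ℕ) :
    sobQDeriv α β j Ms n k = jacobiDeriv α β n k -
      Ms n * jacobiDeriv α β n j / (1 + Ms n * kernK α β j j (n - 1) 1 1) *
        kernK α β j k (n - 1) 1 1 := by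
  simp only [sobQDeriv, sobQ, iterate_derivative_sub, iterate_derivative_C_mul, eval_sub, eval_mul,
    eval_C, iterate_derivative_kernKPoly_eval_one, jacobiDeriv]

lemma sobQDeriv_nonneg (hα : -1 < α) (hβ : -1 < β) {n k : ℕ} (hMs : 0 ≤ Ms n) (hjk : j ≤ k) :
    0 ≤ sobQDeriv α β j Ms n k := by
  have hkern := kernK_one_one_nonneg hα hβ j j (n - 1)
  have hcross := mul_le_mul_of_nonneg_left
    (kernK_one_one_mul_jacobiDeriv_le hα hβ j (n.sub_le 1) hjk) hMs
  rw [sobQDeriv_eq, sub_nonneg, div_mul_eq_mul_div, div_le_iff₀ (by positivity)]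
  linarith [jacobiDeriv_nonneg hα hβ n k]

/-- The mass `M` in the normalization `M_n K_{n-1}^{(j,j)}(1,1) → scaledMass / (2(α+2j+1))`,
where `M_n n^{2(α+2j+1)} → M`. -/
noncomputable def scaledMass (α β : ℝ) (j : ℕ) (M : ℝ) : ℝ :=
  M / (2 ^ (α + β + 2 * j) * Real.Gamma (α + j + 1) ^ 2)

lemma tendsto_mass_mul_kernK_div_jacobiDeriv (hα : -1 < α) (hβ : -1 < β)
    (hlim : Tendsto (fun n : ℕ => Ms n * (n : ℝ) ^ (2 * (α + 2 * j + 1))) atTop (nhds M)) (k : ℕ) :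
    Tendsto (fun n =>
        Ms n * (jacobiDeriv α β n j * kernK α β j k (n - 1) 1 1 / jacobiDeriv α β n k))
      atTop (nhds (scaledMass α β j M / (2 * (α + j + k + 1)))) := by
  have hequiv := ((jacobiDeriv_isEquivalent hα hβ j).mul (kernK_one_one_isEquivalent hα hβ j k)).div
    (jacobiDeriv_isEquivalent hα hβ k)
  refine ((IsEquivalent.refl (u := Ms)).mul hequiv).symm.tendsto_nhds ?_
  have hj := Gamma_add_natCast_add_one_pos hα j
  have hk := Gamma_add_natCast_add_one_pos hα k
  have hq : 0 < α + j + k + 1 := by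
    linarith [j.cast_nonneg (α := ℝ), k.cast_nonneg (α := ℝ)]
  have hscaled : scaledMass α β j M / (2 * (α + j + k + 1)) =
      M * (1 / (2 ^ (α + β + 2 * j) * Real.Gamma (α + j + 1) ^ 2) / (2 * (α + j + k + 1))) := by
    rw [scaledMass]
    ring
  rw [hscaled]
  refine (hlim.mul_const _).congr' ?_
  filter_upwards [eventually_gt_atTop 0] with n hn
  have hn0 : (0 : ℝ) < n := by positivity
  have hexp : (n : ℝ) ^ (α + 2 * j) * (n : ℝ) ^ (2 * (α + j + k + 1)) =
      (n : ℝ) ^ (2 * (α + 2 * j + 1)) * (n : ℝ) ^ (α + 2 * k) := by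
    rw [← Real.rpow_add hn0, ← Real.rpow_add hn0]
    ring_nf
  have htwo (l : ℕ) : (2 : ℝ) ^ (α + β + j + l) = 2 ^ (α + β) * 2 ^ j * 2 ^ l := by
    rw [Real.rpow_add_natCast two_ne_zero, Real.rpow_add_natCast two_ne_zero]
  simp only [Pi.mul_apply, Pi.div_apply]
  rw [htwo k, show α + β + 2 * j = α + β + j + j by ring, htwo j]
  field_simp
  linear_combination -Ms n * hexp

/-- The limit of `Q_n^{(k)}(1) / P_n^{(k)}(1)`. -/
noncomputable def sobolevRatio (α β : ℝ) (j : ℕ) (M : ℝ) (k : ℕ) : ℝ :=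
  1 - scaledMass α β j M / (2 * (α + j + k + 1)) /
    (1 + scaledMass α β j M / (2 * (α + j + j + 1)))

lemma scaledMass_pos (hα : -1 < α) (hM : 0 < M) : 0 < scaledMass α β j M := by
  have hΓ := Gamma_add_natCast_add_one_pos hα j
  unfold scaledMass
  positivity

lemma tendsto_sobQDeriv_div_jacobiDeriv (hα : -1 < α) (hβ : -1 < β) (hM : 0 < M)
    (hlim : Tendsto (fun n : ℕ => Ms n * (n : ℝ) ^ (2 * (α + 2 * j + 1))) atTop (nhds M)) (k : ℕ) :
    Tendsto (fun n => sobQDeriv α β j Ms n k / jacobiDeriv α β n k) atTop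
      (nhds (sobolevRatio α β j M k)) := by
  have hX := scaledMass_pos (β := β) (j := j) hα hM
  have hq : 0 < α + j + j + 1 := by linarith [j.cast_nonneg (α := ℝ)]
  have hjk := tendsto_mass_mul_kernK_div_jacobiDeriv hα hβ hlim k
  have hjj := (tendsto_mass_mul_kernK_div_jacobiDeriv hα hβ hlim j).const_add 1
  refine ((hjk.div hjj (by positivity)).const_sub 1).congr' ?_
  filter_upwards [eventually_ge_atTop j, eventually_ge_atTop k] with n hjn hkn
  have hDj := jacobiDeriv_pos hα hβ hjn
  have hDk := jacobiDeriv_pos hα hβ hkn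
  rw [Pi.div_apply, mul_div_cancel_left₀ _ hDj.ne', sobQDeriv_eq, sub_div, div_self hDk.ne']
  ring

lemma sobolevRatio_self_pos (hα : -1 < α) (hM : 0 < M) : 0 < sobolevRatio α β j M j := by
  have hX := scaledMass_pos (β := β) (j := j) hα hM
  have hq : 0 < α + j + j + 1 := by linarith [j.cast_nonneg (α := ℝ)]
  rw [sobolevRatio, sub_pos, div_lt_one (by positivity)]
  exact lt_one_add _

lemma sobolevRatio_zero_neg (hα : -1 < α) (hj : 1 ≤ j)
    (hMbig : (2 : ℝ) ^ (α + β + 2 * (j : ℝ) + 1) * (α + j + 1) * (α + 2 * j + 1) *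
        Real.Gamma (α + j + 1) ^ 2 / j < M) :
    sobolevRatio α β j M 0 < 0 := by
  have hj1 : (1 : ℝ) ≤ j := mod_cast hj
  have hΓ := Gamma_add_natCast_add_one_pos hα j
  have hcrit : 2 * (α + j + 1) * (α + j + j + 1) < j * scaledMass α β j M := by
    rw [div_lt_iff₀ (by positivity), Real.rpow_add_one two_ne_zero] at hMbig
    rw [scaledMass, ← mul_div_assoc, lt_div_iff₀ (by positivity)]
    linarith
  have ha : 0 < 2 * (α + j + 1) := by linarith
  have hb : 0 < 2 * (α + j + j + 1) := by linarith
  have hX : 0 < scaledMass α β j M := by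
    refine pos_of_mul_pos_right (lt_trans ?_ hcrit) (by positivity)
    nlinarith
  rw [sobolevRatio, Nat.cast_zero, add_zero, sub_neg, one_lt_div (by positivity),
    one_add_div hb.ne', div_lt_div_iff₀ hb ha]
  linarith

lemma sobQDeriv_isLittleO (hα : -1 < α) (hβ : -1 < β) (hM : 0 < M)
    (hlim : Tendsto (fun n : ℕ => Ms n * (n : ℝ) ^ (2 * (α + 2 * j + 1))) atTop (nhds M))
    {k : ℕ} (hkj : k < j) :
    (fun n => sobQDeriv α β j Ms n k) =o[atTop] fun n => sobQDeriv α β j Ms n j := by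
  have hQP : (fun n => sobQDeriv α β j Ms n k) =O[atTop] fun n => jacobiDeriv α β n k :=
    isBigO_of_div_tendsto_nhds
      ((eventually_ge_atTop k).mono fun n hkn h => absurd h (jacobiDeriv_pos hα hβ hkn).ne') _
      (tendsto_sobQDeriv_div_jacobiDeriv hα hβ hM hlim k)
  have hPQ : (fun n => jacobiDeriv α β n j) =O[atTop] fun n => sobQDeriv α β j Ms n j :=
    isBigO_of_div_tendsto_nhds_of_ne_zero (tendsto_sobQDeriv_div_jacobiDeriv hα hβ hM hlim j)
      (sobolevRatio_self_pos hα hM).ne'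
  exact (hQP.trans_isLittleO (jacobiDeriv_isLittleO hα hβ hkj)).trans_isBigO hPQ

lemma eventually_sobQDeriv_self_pos (hα : -1 < α) (hβ : -1 < β) (hM : 0 < M)
    (hlim : Tendsto (fun n : ℕ => Ms n * (n : ℝ) ^ (2 * (α + 2 * j + 1))) atTop (nhds M)) :
    ∀ᶠ n in atTop, 0 < sobQDeriv α β j Ms n j := by
  filter_upwards [eventually_ge_atTop j, (tendsto_sobQDeriv_div_jacobiDeriv hα hβ hM hlim
    j).eventually_const_lt (sobolevRatio_self_pos hα hM)] with n hjn hpos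
  exact (div_pos_iff_of_pos_right (jacobiDeriv_pos hα hβ hjn)).1 hpos

lemma eventually_eval_one_sobQ_neg (hα : -1 < α) (hβ : -1 < β) (hj : 1 ≤ j) (hM : 0 < M)
    (hlim : Tendsto (fun n : ℕ => Ms n * (n : ℝ) ^ (2 * (α + 2 * j + 1))) atTop (nhds M))
    (hMbig : (2 : ℝ) ^ (α + β + 2 * (j : ℝ) + 1) * (α + j + 1) * (α + 2 * j + 1) *
        Real.Gamma (α + j + 1) ^ 2 / j < M) :
    ∀ᶠ n in atTop, (sobQ α β j Ms n).eval 1 < 0 := by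
  filter_upwards [(tendsto_sobQDeriv_div_jacobiDeriv hα hβ hM hlim 0).eventually_lt_const
    (sobolevRatio_zero_neg hα hj hMbig)] with n hneg
  exact neg_of_div_neg_left hneg (jacobiDeriv_nonneg hα hβ n 0)

end SobolevDerivatives

section LargestZero

variable {α β : ℝ} {j : ℕ} {Ms : ℕ → ℝ} {M : ℝ}

lemma sum_mul_pow_pos {q : ℕ → ℝ} {N : ℕ} {s t : ℝ} (hq : ∀ k, j < k → 0 ≤ q k) (hjN : j < N)
    (hs : 0 < s) (hst : s ≤ t) (hdom : ∑ k ∈ Finset.range j, |q k| * s ^ k < q j * s ^ j) :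
    0 < ∑ k ∈ Finset.range N, q k * t ^ k := by
  have ht : 0 < t := hs.trans_le hst
  have hlow : ∑ k ∈ Finset.range j, |q k| * t ^ k < q j * t ^ j := by
    refine lt_of_mul_lt_mul_right ?_ (pow_pos hs j).le
    calc (∑ k ∈ Finset.range j, |q k| * t ^ k) * s ^ j
        ≤ (∑ k ∈ Finset.range j, |q k| * s ^ k) * t ^ j := by
          rw [Finset.sum_mul, Finset.sum_mul]
          refine Finset.sum_le_sum fun k hk => ?_
          have hkj := (Finset.mem_range.1 hk).le
          calc |q k| * t ^ k * s ^ j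
              = |q k| * s ^ k * (s ^ (j - k) * t ^ k) := by rw [← pow_sub_mul_pow s hkj]; ring
            _ ≤ |q k| * s ^ k * (t ^ (j - k) * t ^ k) := by gcongr
            _ = |q k| * s ^ k * t ^ j := by rw [pow_sub_mul_pow t hkj]
      _ < q j * s ^ j * t ^ j := mul_lt_mul_of_pos_right hdom (pow_pos ht j)
      _ = q j * t ^ j * s ^ j := by ring
  have hneg : -∑ k ∈ Finset.range j, |q k| * t ^ k ≤ ∑ k ∈ Finset.range j, q k * t ^ k := by
    rw [← Finset.sum_neg_distrib]
    exact Finset.sum_le_sum fun k _ => by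
      rw [← neg_mul]
      exact mul_le_mul_of_nonneg_right (neg_abs_le _) (pow_pos ht k).le
  have hhigh : 0 ≤ ∑ k ∈ Finset.Ico (j + 1) N, q k * t ^ k :=
    Finset.sum_nonneg fun k hk => mul_nonneg (hq k (Finset.mem_Ico.1 hk).1) (pow_pos ht k).le
  rw [← Finset.sum_range_add_sum_Ico _ (Nat.succ_le_of_lt hjN), Finset.sum_range_succ]
  linarith

lemma eventually_sum_abs_sobQDeriv_lt (hα : -1 < α) (hβ : -1 < β) (hM : 0 < M)
    (hlim : Tendsto (fun n : ℕ => Ms n * (n : ℝ) ^ (2 * (α + 2 * j + 1))) atTop (nhds M))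
    {s : ℝ} (hs : 0 < s) :
    ∀ᶠ n in atTop, ∑ k ∈ Finset.range j, |sobQDeriv α β j Ms n k / k.factorial| * s ^ k <
      sobQDeriv α β j Ms n j / j.factorial * s ^ j := by
  have hsum : (fun n => ∑ k ∈ Finset.range j, |sobQDeriv α β j Ms n k / k.factorial| * s ^ k)
      =o[atTop] fun n => s ^ j / j.factorial * sobQDeriv α β j Ms n j := by
    refine (Asymptotics.IsLittleO.fun_sum fun k hk => ?_).const_mul_right (by positivity)
    have hkj := sobQDeriv_isLittleO hα hβ hM hlim (Finset.mem_range.1 hk)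
    refine (hkj.abs_left.const_mul_left (s ^ k / k.factorial)).congr_left fun n => ?_
    rw [abs_div, Nat.abs_cast]
    ring
  have hpos : ∀ᶠ n in atTop, 0 < s ^ j / j.factorial * sobQDeriv α β j Ms n j :=
    (eventually_sobQDeriv_self_pos hα hβ hM hlim).mono fun n hn => by positivity
  filter_upwards [hpos, hsum.eventuallyLT_norm_of_eventually_pos
    (hpos.mono fun n hn => norm_pos_iff.2 hn.ne')] with n hn hlt
  rw [Real.norm_of_nonneg hn.le] at hlt
  calc ∑ k ∈ Finset.range j, |sobQDeriv α β j Ms n k / k.factorial| * s ^ k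
      ≤ ‖∑ k ∈ Finset.range j, |sobQDeriv α β j Ms n k / k.factorial| * s ^ k‖ :=
        Real.le_norm_self _
    _ < s ^ j / j.factorial * sobQDeriv α β j Ms n j := hlt
    _ = sobQDeriv α β j Ms n j / j.factorial * s ^ j := by ring

lemma eval_sobQ_eq_sum {n N : ℕ} (hN : (sobQ α β j Ms n).natDegree < N) (x : ℝ) :
    (sobQ α β j Ms n).eval x =
      ∑ k ∈ Finset.range N, sobQDeriv α β j Ms n k / k.factorial * (x - 1) ^ k := by
  rw [eval_eq_sum_coeff_taylor_mul_pow _ 1 x hN]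
  refine Finset.sum_congr rfl fun k _ => ?_
  rw [sobQDeriv, iterate_derivative_eval_eq_factorial_mul_coeff_taylor,
    mul_div_cancel_left₀ _ (by positivity)]

lemma eventually_forall_eval_sobQ_pos (hα : -1 < α) (hβ : -1 < β) (hM : 0 < M)
    (hMs : ∀ n, 0 ≤ Ms n)
    (hlim : Tendsto (fun n : ℕ => Ms n * (n : ℝ) ^ (2 * (α + 2 * j + 1))) atTop (nhds M))
    {b : ℝ} (hb : 1 < b) :
    ∀ᶠ n in atTop, ∀ x, b ≤ x → 0 < (sobQ α β j Ms n).eval x := by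
  filter_upwards [eventually_sum_abs_sobQDeriv_lt hα hβ hM hlim (sub_pos.2 hb)] with n hdom x hbx
  rw [eval_sobQ_eq_sum (N := (sobQ α β j Ms n).natDegree + j + 1) (by lia)]
  exact sum_mul_pow_pos
    (fun k hjk => div_nonneg (sobQDeriv_nonneg hα hβ (hMs n) hjk.le) k.factorial.cast_nonneg)
    (by lia) (sub_pos.2 hb) (sub_le_sub_right hbx 1) hdom

end LargestZero

lemma exists_eval_eq_zero_of_eval_neg_of_eval_pos (p : ℝ[X]) {a b : ℝ} (hab : a ≤ b)
    (ha : p.eval a < 0) (hb : 0 < p.eval b) : ∃ z, a ≤ z ∧ p.eval z = 0 := by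
  obtain ⟨z, hz, hpz⟩ := intermediate_value_Icc hab p.continuousOn ⟨ha.le, hb.le⟩
  exact ⟨z, hz.1, hpz⟩

/-- for `γ = 2(α+2j+1)` and `M` above the critical value, the largest real
zero of `Q_n` tends to 1. -/
theorem sobQ_largest_zero_tendsto_one_critical (α β : ℝ) (hα : -1 < α) (hβ : -1 < β)
    (j : ℕ) (hj : 1 ≤ j) (γ M : ℝ) (hM : 0 < M) (Ms : ℕ → ℝ) (hMs : ∀ n, 0 ≤ Ms n)
    (hγ : γ = 2 * (α + 2 * j + 1))
    (hlim : Filter.Tendsto (fun n : ℕ => Ms n * (n : ℝ) ^ γ) Filter.atTop (nhds M))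
    (hMbig : (2 : ℝ) ^ (α + β + 2 * (j : ℝ) + 1) * (α + j + 1) * (α + 2 * j + 1) *
        Real.Gamma (α + j + 1) ^ 2 / j < M)
    (y : ℕ → ℝ)
    (hy : ∀ n, 1 ≤ n → IsGreatest {x : ℝ | (sobQ α β j Ms n).eval x = 0} (y n)) :
    Filter.Tendsto y Filter.atTop (nhds 1) := by
  subst hγ
  have hpos {b : ℝ} (hb : 1 < b) := eventually_forall_eval_sobQ_pos hα hβ hM hMs hlim hb
  refine tendsto_order.2 ⟨fun a ha => ?_, fun b hb => ?_⟩
  · filter_upwards [eventually_eval_one_sobQ_neg hα hβ hj hM hlim hMbig, hpos one_lt_two,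
      eventually_ge_atTop 1] with n hneg hpos_two hn
    obtain ⟨z, hz, hroot⟩ := exists_eval_eq_zero_of_eval_neg_of_eval_pos _ one_le_two hneg
      (hpos_two 2 le_rfl)
    exact ha.trans_le (hz.trans ((hy n hn).2 hroot))
  · filter_upwards [hpos hb, eventually_ge_atTop 1] with n hpos_n hn
    exact lt_of_not_ge fun hby => (hpos_n (y n) hby).ne' (hy n hn).1
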